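/- Let μ and ρ be probability measures on a measurable space with ρ absolutely continuous with respect to μ and χ²(ρ‖μ) := ∫ (dρ/dμ − 1)² dμ < ∞. For β ≥ 1, define the mixture ρ̂ := (1 − 1/β)·μ + (1/β)·ρ. Then ρ̂ is absolutely continuous with respect to μ, χ²(ρ̂‖μ) = β^{−2}·χ²(ρ‖μ), and KL(ρ̂‖μ) ≤ β^{−2}·χ²(ρ‖μ). -/

import Mathlib

open MeasureTheory Real

noncomputable section

/-- The chi-squared divergence `χ²(ρ‖μ) = ∫ (dρ/dμ − 1)² dμ` (as a real number). -/
def chiSqReal {X : Type*} [MeasurableSpace X] (ρ μ : Measure X) : ℝ :=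
  ∫ x, ((ρ.rnDeriv μ x).toReal - 1) ^ 2 ∂μ

/-- The Kullback–Leibler divergence `KL(ρ‖μ) = ∫ log(dρ/dμ) dρ` (as a real number). -/
def klReal {X : Type*} [MeasurableSpace X] (ρ μ : Measure X) : ℝ :=
  ∫ x, Real.log ((ρ.rnDeriv μ x).toReal) ∂ρ

/-- The mixture `ρ̂ = (1 − 1/β) μ + (1/β) ρ`. -/
def mixture {X : Type*} [MeasurableSpace X] (μ ρ : Measure X) (β : ℝ) : Measure X :=
  ENNReal.ofReal (1 - 1 / β) • μ + ENNReal.ofReal (1 / β) • ρ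

/-!
Mixing contracts the centred density: `dρ̂/dμ − 1 = β⁻¹ (dρ/dμ − 1)` holds `μ`-almost everywhere, so
the chi-squared divergence scales by `β⁻²`. For the entropy bound, `log y ≤ y − 1` gives
`y log y + 1 − y ≤ (y − 1)²`; integrating at `y = dρ̂/dμ` yields `KL(ρ̂‖μ) ≤ χ²(ρ̂‖μ)`, because the
linear terms contribute `μ(X) − ρ̂(X) ≥ 0` to the left-hand side.
-/

section Divergence

open InformationTheory

variable {X : Type*} [MeasurableSpace X] {μ ρ : Measure X} {β : ℝ}

lemma klFun_le_sub_one_sq {y : ℝ} (hy : 0 ≤ y) : klFun y ≤ (y - 1) ^ 2 := by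
  have mul_log_le : y * log y ≤ y * (y - 1) := by
    rcases hy.eq_or_lt with rfl | hy_pos
    · simp
    · exact mul_le_mul_of_nonneg_left (log_le_sub_one_of_pos hy_pos) hy
  calc
    klFun y = y * log y + 1 - y := klFun_apply y
    _ ≤ y * (y - 1) + 1 - y := by gcongr
    _ = (y - 1) ^ 2 := by ring

lemma integrable_klFun_rnDeriv_of_integrable_sq
    (hsq : Integrable (fun x ↦ ((ρ.rnDeriv μ x).toReal - 1) ^ 2) μ) :
    Integrable (fun x ↦ klFun (ρ.rnDeriv μ x).toReal) μ := by
  refine hsq.mono' (Measurable.aestronglyMeasurable (by fun_prop)) (ae_of_all _ fun x ↦ ?_)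
  rw [norm_of_nonneg (klFun_nonneg ENNReal.toReal_nonneg)]
  exact klFun_le_sub_one_sq ENNReal.toReal_nonneg

lemma klReal_le_chiSqReal [IsFiniteMeasure μ] [IsFiniteMeasure ρ] (hac : ρ ≪ μ)
    (hmass : ρ Set.univ ≤ μ Set.univ)
    (hsq : Integrable (fun x ↦ ((ρ.rnDeriv μ x).toReal - 1) ^ 2) μ) :
    klReal ρ μ ≤ chiSqReal ρ μ := by
  have hkl := integrable_klFun_rnDeriv_of_integrable_sq hsq
  have hmass_real : ρ.real Set.univ ≤ μ.real Set.univ :=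
    ENNReal.toReal_mono (measure_ne_top μ _) hmass
  have integral_klFun_eq : ∫ x, klFun (ρ.rnDeriv μ x).toReal ∂μ =
      klReal ρ μ + μ.real Set.univ - ρ.real Set.univ :=
    integral_klFun_rnDeriv hac ((integrable_klFun_rnDeriv_iff hac).mp hkl)
  calc
    klReal ρ μ ≤ ∫ x, klFun (ρ.rnDeriv μ x).toReal ∂μ := by linarith
    _ ≤ chiSqReal ρ μ :=
      integral_mono hkl hsq fun _ ↦ klFun_le_sub_one_sq ENNReal.toReal_nonneg

instance isFiniteMeasure_mixture [IsFiniteMeasure μ] [IsFiniteMeasure ρ] :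
    IsFiniteMeasure (mixture μ ρ β) := by
  have := μ.smul_finite (ENNReal.ofReal_ne_top (r := 1 - 1 / β))
  have := ρ.smul_finite (ENNReal.ofReal_ne_top (r := 1 / β))
  unfold mixture
  infer_instance

lemma mixture_absolutelyContinuous (hac : ρ ≪ μ) : mixture μ ρ β ≪ μ :=
  (Measure.AbsolutelyContinuous.rfl.smul_left _).add_left (hac.smul_left _)

lemma ofReal_one_sub_add_ofReal_eq_one {t : ℝ} (ht₀ : 0 ≤ t) (ht₁ : t ≤ 1) :
    ENNReal.ofReal (1 - t) + ENNReal.ofReal t = 1 := by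
  rw [← ENNReal.ofReal_add (sub_nonneg.mpr ht₁) ht₀, sub_add_cancel, ENNReal.ofReal_one]

lemma mixture_apply_le (hβ : 1 ≤ β) {s : Set X} (hs : ρ s ≤ μ s) : mixture μ ρ β s ≤ μ s := by
  have hβ_inv : 1 / β ≤ 1 := (div_le_one (by positivity)).mpr hβ
  calc
    mixture μ ρ β s = ENNReal.ofReal (1 - 1 / β) * μ s + ENNReal.ofReal (1 / β) * ρ s := rfl
    _ ≤ ENNReal.ofReal (1 - 1 / β) * μ s + ENNReal.ofReal (1 / β) * μ s := by gcongr
    _ = μ s := by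
      rw [← add_mul, ofReal_one_sub_add_ofReal_eq_one (by positivity) hβ_inv, one_mul]

section SigmaFinite

variable [SigmaFinite μ] [SigmaFinite ρ]

variable (μ ρ β) in
lemma rnDeriv_mixture :
    (mixture μ ρ β).rnDeriv μ =ᵐ[μ]
      fun x ↦ ENNReal.ofReal (1 - 1 / β) + ENNReal.ofReal (1 / β) * ρ.rnDeriv μ x := by
  have : SigmaFinite (ENNReal.ofReal (1 - 1 / β) • μ) :=
    inferInstanceAs (SigmaFinite ((1 - 1 / β).toNNReal • μ))
  have : SigmaFinite (ENNReal.ofReal (1 / β) • ρ) :=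
    inferInstanceAs (SigmaFinite ((1 / β).toNNReal • ρ))
  filter_upwards [
    Measure.rnDeriv_add' (ENNReal.ofReal (1 - 1 / β) • μ) (ENNReal.ofReal (1 / β) • ρ) μ,
    Measure.rnDeriv_smul_left_of_ne_top' μ μ (ENNReal.ofReal_ne_top (r := 1 - 1 / β)),
    Measure.rnDeriv_smul_left_of_ne_top' ρ μ (ENNReal.ofReal_ne_top (r := 1 / β)),
    Measure.rnDeriv_self μ] with x hadd hμ hρ hself
  simp only [mixture, hadd, Pi.add_apply, hμ, hρ, Pi.smul_apply, hself, smul_eq_mul, mul_one]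

lemma toReal_rnDeriv_mixture_sub_one (hβ : 1 ≤ β) :
    ∀ᵐ x ∂μ, ((mixture μ ρ β).rnDeriv μ x).toReal - 1 = β⁻¹ * ((ρ.rnDeriv μ x).toReal - 1) := by
  have hβ_inv : 1 / β ≤ 1 := (div_le_one (by positivity)).mpr hβ
  filter_upwards [rnDeriv_mixture μ ρ β, ρ.rnDeriv_lt_top μ] with x hx hfin
  rw [hx, ENNReal.toReal_add ENNReal.ofReal_ne_top
      (ENNReal.mul_ne_top ENNReal.ofReal_ne_top hfin.ne),
    ENNReal.toReal_mul, ENNReal.toReal_ofReal (sub_nonneg.mpr hβ_inv),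
    ENNReal.toReal_ofReal (by positivity)]
  ring

lemma sq_rnDeriv_mixture_sub_one (hβ : 1 ≤ β) :
    (fun x ↦ (((mixture μ ρ β).rnDeriv μ x).toReal - 1) ^ 2) =ᵐ[μ]
      fun x ↦ β⁻¹ ^ 2 * ((ρ.rnDeriv μ x).toReal - 1) ^ 2 := by
  filter_upwards [toReal_rnDeriv_mixture_sub_one (ρ := ρ) hβ] with x hx
  rw [hx, mul_pow]

lemma chiSqReal_mixture (hβ : 1 ≤ β) :
    chiSqReal (mixture μ ρ β) μ = β⁻¹ ^ 2 * chiSqReal ρ μ := by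
  rw [chiSqReal, integral_congr_ae (sq_rnDeriv_mixture_sub_one hβ), integral_const_mul, chiSqReal]

end SigmaFinite

end Divergence

theorem statement16_general {X : Type*} [MeasurableSpace X] (μ ρ : Measure X)
    [IsFiniteMeasure μ] [IsFiniteMeasure ρ]
    (hac : ρ ≪ μ) (hmass : ρ Set.univ ≤ μ Set.univ)
    (hfin : Integrable (fun x => ((ρ.rnDeriv μ x).toReal - 1) ^ 2) μ)
    (β : ℝ) (hβ : 1 ≤ β) :
    mixture μ ρ β ≪ μ ∧
    chiSqReal (mixture μ ρ β) μ = β⁻¹ ^ 2 * chiSqReal ρ μ ∧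
    klReal (mixture μ ρ β) μ ≤ β⁻¹ ^ 2 * chiSqReal ρ μ := by
  have hac_mixture : mixture μ ρ β ≪ μ := mixture_absolutelyContinuous hac
  have hfin_mixture : Integrable (fun x ↦ (((mixture μ ρ β).rnDeriv μ x).toReal - 1) ^ 2) μ :=
    (hfin.const_mul _).congr (sq_rnDeriv_mixture_sub_one hβ).symm
  refine ⟨hac_mixture, chiSqReal_mixture hβ, ?_⟩
  rw [← chiSqReal_mixture hβ]
  exact klReal_le_chiSqReal hac_mixture (mixture_apply_le hβ hmass) hfin_mixture

/-- for the mixture `ρ̂ = (1 − 1/β) μ + (1/β) ρ` with `β ≥ 1`, one has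
`ρ̂ ≪ μ`, `χ²(ρ̂‖μ) = β⁻² χ²(ρ‖μ)` and `KL(ρ̂‖μ) ≤ β⁻² χ²(ρ‖μ)`. -/
theorem statement16 {X : Type*} [MeasurableSpace X] (μ ρ : Measure X)
    [IsProbabilityMeasure μ] [IsProbabilityMeasure ρ]
    (hac : ρ ≪ μ)
    (hfin : Integrable (fun x => ((ρ.rnDeriv μ x).toReal - 1) ^ 2) μ)
    (β : ℝ) (hβ : 1 ≤ β) :
    mixture μ ρ β ≪ μ ∧
    chiSqReal (mixture μ ρ β) μ = β⁻¹ ^ 2 * chiSqReal ρ μ ∧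
    klReal (mixture μ ρ β) μ ≤ β⁻¹ ^ 2 * chiSqReal ρ μ :=
  statement16_general μ ρ hac (by simp) hfin β hβ

end
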